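/- arXiv:1811.11949 — 2 statements merged into one kernel-verified Lean document; each statement's English description precedes it below -/
import Mathlib

section
/- Let q be a power of 3 with q ≥ 27, let k be a nonsquare in F_q^*, and let E(Y) in F_q[Y] be a nonzero polynomial of degree at most 4. Suppose that for every y in F_q with E(y) ≠ 0 (with finitely many exceptions, at most 5 exceptional values y allowed), E(y) is a square in F_q^*. More precisely: assume E(Y) ≠ 0 and there is a polynomial C(Y) of degree ≤ 1 with C(Y) ≠ 0 such that for every y in F_q with C(y)E(y) ≠ 0, E(y) is a square in F_q^*. Then there exists D(Y) in F_q[Y] such that E(Y) = D(Y)^2. -/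
open Polynomial

lemma aux_sq_dvd {F : Type*} [Field F] (Q : F[X]) (a : F) (h0 : Q.eval a = 0)
    (h1 : (derivative Q).eval a = 0) : (X - C a) ^ 2 ∣ Q := by
  obtain ⟨R, rfl⟩ := dvd_iff_isRoot.mpr h0
  have : R.eval a = 0 := by simpa [derivative_mul] using h1
  obtain ⟨S, rfl⟩ := dvd_iff_isRoot.mpr this
  exact ⟨S, by ring⟩

lemma aux_final {F : Type*} [Field F] (E K : F[X]) (c : F) (hc : c ≠ 0) (h : E * C c = K ^ 2)
    (y t : F) (ht : t ≠ 0) (hy : E.eval y = t ^ 2) : ∃ D : F[X], E = D ^ 2 := by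
  have h1 : t ^ 2 * c = (K.eval y) ^ 2 := by
    have := congrArg (eval y) h
    simpa [hy] using this
  obtain ⟨s, hs⟩ : ∃ s, s = K.eval y / t := ⟨_, rfl⟩
  have hcs : c = s ^ 2 := by
    rw [hs]; field_simp; linear_combination h1
  have hs0 : s ≠ 0 := by
    rintro rfl; apply hc; rw [hcs]; simp
  refine ⟨C s⁻¹ * K, ?_⟩
  have : (C s⁻¹ * C s : F[X]) = 1 := by
    rw [← C_mul, inv_mul_cancel₀ hs0, C_1]
  rw [mul_pow, ← h, hcs, C_pow]
  linear_combination (-(C s⁻¹ * C s + 1) * E) * this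

lemma aux_main {F : Type*} [Field F] (L M N : F[X]) (q : ℕ) (hq : 27 ≤ q) (hL0 : L ≠ 0)
    (hL : L.natDegree = q) (hM : M.natDegree ≤ 10) (hN : N.natDegree ≤ 12) (hM0 : M ≠ 0)
    (E E1 E2 E3 E4 Z : F[X]) (hE : E.natDegree ≤ 4) (hE1 : E1.natDegree ≤ 3)
    (hE2 : E2.natDegree ≤ 2) (hE3 : E3.natDegree ≤ 1) (h3 : (3 : F[X]) = 0)
    (hZ : M * (Z - E + L * E1) = L ^ 2 * N)
    (hZ2 : Z ^ 2 = E * (E + L * E1 + L ^ 2 * E2 + L ^ 3 * E3 + L ^ 4 * E4)) :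
    M ^ 2 * E * E2 - M ^ 2 * E1 ^ 2 - 2 * M * N * E = 0 ∧
    M ^ 2 * E * E3 + 2 * M * N * E1 = 0 ∧ M ^ 2 * E * E4 = N ^ 2 := by
  have key : (M ^ 2 * E * E2 - M ^ 2 * E1 ^ 2 - 2 * M * N * E) +
      L * ((M ^ 2 * E * E3 + 2 * M * N * E1) + L * (M ^ 2 * E * E4 - N ^ 2)) = 0 := by
    have hz : M * Z = M * (E - L * E1) + L ^ 2 * N := by linear_combination hZ
    have hz2 : (M * (E - L * E1) + L ^ 2 * N) ^ 2 =
        M ^ 2 * (E * (E + L * E1 + L ^ 2 * E2 + L ^ 3 * E3 + L ^ 4 * E4)) := by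
      rw [← hz, ← hZ2]; ring
    have : L ^ 2 * ((M ^ 2 * E * E2 - M ^ 2 * E1 ^ 2 - 2 * M * N * E) +
      L * ((M ^ 2 * E * E3 + 2 * M * N * E1) + L * (M ^ 2 * E * E4 - N ^ 2))) = 0 := by
      linear_combination -hz2 - M ^ 2 * L * E * E1 * h3
    exact (mul_eq_zero.mp this).resolve_left (pow_ne_zero _ hL0)
  have two : (2 : F[X]).natDegree ≤ 0 := by
    rw [show (2 : F[X]) = ((2 : ℕ) : F[X]) by norm_num, natDegree_natCast]
  have hM2 : (M ^ 2).natDegree ≤ 20 := (natDegree_pow_le_of_le 2 hM).trans (by norm_num)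
  have hE12 : (E1 ^ 2).natDegree ≤ 6 := (natDegree_pow_le_of_le 2 hE1).trans (by norm_num)
  have hMN : (2 * M * N).natDegree ≤ 0 + 10 + 12 :=
    natDegree_mul_le_of_le (natDegree_mul_le_of_le two hM) hN
  have d0 : (M ^ 2 * E * E2 - M ^ 2 * E1 ^ 2 - 2 * M * N * E).natDegree ≤ 26 := by
    refine (natDegree_sub_le_of_le (natDegree_sub_le_of_le
      (natDegree_mul_le_of_le (natDegree_mul_le_of_le hM2 hE) hE2)
      (natDegree_mul_le_of_le hM2 hE12)) (natDegree_mul_le_of_le hMN hE)).trans (by norm_num)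
  have d1 : (M ^ 2 * E * E3 + 2 * M * N * E1).natDegree ≤ 26 := by
    refine (natDegree_add_le_of_le
      (natDegree_mul_le_of_le (natDegree_mul_le_of_le hM2 hE) hE3)
      (natDegree_mul_le_of_le hMN hE1)).trans (by norm_num)
  have gen : ∀ A B : F[X], A.natDegree ≤ 26 → A + L * B = 0 → A = 0 ∧ B = 0 := by
    intro A B hA h
    have hA0 : A = 0 := eq_zero_of_dvd_of_natDegree_lt (p := L)
      ⟨-B, by linear_combination h⟩ (by omega)
    rw [hA0, zero_add] at h
    exact ⟨hA0, (mul_eq_zero.mp h).resolve_left hL0⟩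
  obtain ⟨a0, key1⟩ := gen _ _ d0 key
  obtain ⟨a1, key⟩ := gen _ _ d1 key1
  exact ⟨a0, a1, sub_eq_zero.mp key⟩

/-- If q = 3^n ≥ 27, k a nonsquare in F_q^*, E ≠ 0 of degree ≤ 4,
C ≠ 0 of degree ≤ 1, and E(y) is a nonzero square for every y with C(y)E(y) ≠ 0,
then E is the square of a polynomial. -/
theorem stmt2 (n : ℕ) (hn : 3 ≤ n)
    (F : Type*) [Field F] [Fintype F] (hcard : Fintype.card F = 3 ^ n)
    (k : F) (hk0 : k ≠ 0) (hk : ¬ ∃ t : F, k = t ^ 2)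
    (E C : Polynomial F) (hE0 : E ≠ 0) (hEdeg : E.natDegree ≤ 4)
    (hC0 : C ≠ 0) (hCdeg : C.natDegree ≤ 1)
    (hsq : ∀ y : F, C.eval y * E.eval y ≠ 0 → ∃ t : F, t ≠ 0 ∧ E.eval y = t ^ 2) :
    ∃ D : Polynomial F, E = D ^ 2 := by
  classical
  have h3F : (3 : F) = 0 := by
    have h := FiniteField.cast_card_eq_zero F
    rw [hcard] at h
    push_cast at h
    exact pow_eq_zero_iff (by omega) |>.mp h
  have h3 : (3 : F[X]) = 0 := by
    have := congrArg (Polynomial.C : F →+* F[X]) h3F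
    rwa [map_ofNat, map_zero] at this
  obtain ⟨q, hqdef⟩ : ∃ q, q = Fintype.card F := ⟨_, rfl⟩
  have hq27 : 27 ≤ q := by
    rw [hqdef, hcard]
    calc 27 = 3 ^ 3 := by norm_num
      _ ≤ 3 ^ n := Nat.pow_le_pow_right (by norm_num) hn
  -- m
  obtain ⟨m, hm, hm1⟩ : ∃ m, q = 2 * m + 1 ∧ ((m : ℕ) : F) = 1 := by
    have hodd : Odd q := by rw [hqdef, hcard]; exact Odd.pow (by decide)
    obtain ⟨m, hm⟩ := hodd
    refine ⟨m, hm, ?_⟩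
    have h := FiniteField.cast_card_eq_zero F
    rw [← hqdef, hm] at h
    push_cast at h
    linear_combination -h + (m : F) * h3F
  obtain ⟨W, hW⟩ : ∃ W, W = C * E := ⟨_, rfl⟩
  have hW0 : W ≠ 0 := hW ▸ mul_ne_zero hC0 hE0
  have hWd : W.natDegree ≤ 5 := by
    rw [hW]; exact natDegree_mul_le_of_le hCdeg hEdeg
  obtain ⟨L, hLdef⟩ : ∃ L : F[X], L = X ^ q - X := ⟨_, rfl⟩
  have hLd : L.natDegree = q := by
    rw [hLdef]; exact FiniteField.X_pow_card_sub_X_natDegree_eq F (by omega)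
  have hL0 : L ≠ 0 := by
    rintro h; rw [h] at hLd; simp at hLd; omega
  have hLprod : L = ∏ a : F, (X - Polynomial.C a) := by
    rw [hLdef, hqdef]
    have hr := FiniteField.roots_X_pow_card_sub_X F
    have hmon : (X ^ Fintype.card F - X : F[X]).Monic :=
      monic_X_pow_sub (by rw [degree_X]; exact_mod_cast (show 1 < Fintype.card F by omega))
    have := prod_multiset_X_sub_C_of_monic_of_roots_card_eq hmon (by
      rw [hr, FiniteField.X_pow_card_sub_X_natDegree_eq F (by omega)]; rfl)
    rw [hr] at this
    exact this.symm
  have hq0F : (q : F) = 0 := by rw [hqdef]; exact FiniteField.cast_card_eq_zero F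
  have hLe : ∀ a : F, L.eval a = 0 := by
    intro a; rw [hLdef, hqdef]; simp [FiniteField.pow_card]
  have hL' : derivative L = -1 := by
    rw [hLdef, derivative_sub, derivative_X_pow, hq0F]; simp
  -- good point
  obtain ⟨y, hy⟩ : ∃ y, W.eval y ≠ 0 := by
    by_contra! hall
    refine hW0 (eq_zero_of_dvd_of_natDegree_lt (p := L) ?_ (by omega))
    rw [hLprod]
    refine Finset.prod_dvd_of_coprime ?_ ?_
    · exact fun a _ b _ hab => pairwise_coprime_X_sub_C Function.injective_id hab
    · intro a _; exact dvd_iff_isRoot.mpr (hall a)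
  have hsq' : ∀ y, W.eval y ≠ 0 → ∃ t : F, t ≠ 0 ∧ E.eval y = t ^ 2 := by
    intro y hy; apply hsq; rwa [hW, eval_mul] at hy
  obtain ⟨t, ht0, ht⟩ := hsq' y hy
  -- N
  obtain ⟨N, hN⟩ : L ^ 2 ∣ W ^ 2 * (E ^ (m + 1) - E + L * derivative E) := by
    rw [hLprod, ← Finset.prod_pow, ← hLprod]
    refine Finset.prod_dvd_of_coprime ?_ ?_
    · exact fun a _ b _ hab => (pairwise_coprime_X_sub_C Function.injective_id hab).pow
    · intro a _
      by_cases ha : W.eval a = 0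
      · exact Dvd.dvd.mul_right (pow_dvd_pow_of_dvd (dvd_iff_isRoot.mpr ha) 2) _
      · refine Dvd.dvd.mul_left ?_ _
        obtain ⟨s, hs0, hs⟩ := hsq' a ha
        have hEm : (E.eval a) ^ m = 1 := by
          rw [hs, ← pow_mul, show 2 * m = Fintype.card F - 1 by omega]
          exact FiniteField.pow_card_sub_one_eq_one s hs0
        apply aux_sq_dvd
        · simp [pow_succ, hEm, hLe]
        · simp [derivative_pow, hEm, hLe, hL', hm1]
          ring
  have hNd : N.natDegree ≤ 12 := by
    by_cases hN0 : N = 0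
    · simp [hN0]
    have h1 : (W ^ 2 * (E ^ (m + 1) - E + L * derivative E)).natDegree ≤ 2 * 5 + (2 * q + 2) := by
      refine natDegree_mul_le_of_le (natDegree_pow_le_of_le 2 hWd) ?_
      refine (natDegree_add_le_of_le (natDegree_sub_le_of_le
        (natDegree_pow_le_of_le (m + 1) hEdeg) hEdeg) (natDegree_mul_le_of_le hLd.le
        ((natDegree_derivative_le E).trans (Nat.sub_le_sub_right hEdeg 1)))).trans ?_
      simp only [max_le_iff]
      omega
    rw [hN, natDegree_mul (pow_ne_zero _ hL0) hN0, natDegree_pow, hLd] at h1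
    omega
  -- expansion
  obtain ⟨e0, e1, e2, e3, e4, hE⟩ : ∃ e0 e1 e2 e3 e4 : F, E = Polynomial.C e0 +
      Polynomial.C e1 * X + Polynomial.C e2 * X ^ 2 + Polynomial.C e3 * X ^ 3
      + Polynomial.C e4 * X ^ 4 := by
    refine ⟨E.coeff 0, E.coeff 1, E.coeff 2, E.coeff 3, E.coeff 4, ?_⟩
    conv_lhs => rw [E.as_sum_range_C_mul_X_pow' (n := 5) (by omega)]
    simp [Finset.sum_range_succ]
  have hE1 : derivative E = Polynomial.C e1 + 2 * Polynomial.C e2 * X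
      + 3 * Polynomial.C e3 * X ^ 2 + 4 * Polynomial.C e4 * X ^ 3 := by
    rw [hE]; simp
    simp only [map_ofNat, map_add, map_one]
    ring
  obtain ⟨E2, hE2⟩ : ∃ E2, E2 = Polynomial.C e2 + Polynomial.C (3 * e3) * X
      + Polynomial.C (6 * e4) * X ^ 2 := ⟨_, rfl⟩
  obtain ⟨E3, hE3⟩ : ∃ E3, E3 = Polynomial.C e3 + Polynomial.C (4 * e4) * X := ⟨_, rfl⟩
  have hEq : E ^ q = E + L * derivative E + L ^ 2 * E2 + L ^ 3 * E3
      + L ^ 4 * Polynomial.C e4 := by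
    have hX : (X : F[X]) ^ q = X + L := by rw [hLdef]; ring
    have h4 : E ^ q = Polynomial.C e0 +
      Polynomial.C e1 * (X ^ q) + Polynomial.C e2 * (X ^ q) ^ 2 + Polynomial.C e3 * (X ^ q) ^ 3
      + Polynomial.C e4 * (X ^ q) ^ 4 := by
      rw [hqdef, ← FiniteField.expand_card, hE]
      simp
    rw [h4, hX, hE1, hE2, hE3, hE]
    simp only [map_mul, map_ofNat]
    ring
  obtain ⟨b0, b1, b2⟩ := aux_main L (W ^ 2) N q hq27 hL0 hLd
    (natDegree_pow_le_of_le 2 hWd) hNd (pow_ne_zero _ hW0) E (derivative E) E2 E3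
    (Polynomial.C e4) (E ^ (m + 1)) hEdeg
    ((natDegree_derivative_le E).trans (Nat.sub_le_sub_right hEdeg 1))
    (by rw [hE2]; compute_degree) (by rw [hE3]; compute_degree) h3 hN
    (by rw [← hEq, hm]; ring)
  have hM0 : W ^ 2 ≠ 0 := pow_ne_zero _ hW0
  have hMM0 : (W ^ 2) ^ 2 ≠ 0 := pow_ne_zero _ hM0
  by_cases h4 : e4 = 0
  · have hN0 : N = 0 := by
      rw [h4] at b2; simpa using b2.symm
    rw [hN0] at b0 b1
    have h3' : e3 = 0 := by
      by_contra hne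
      have : (W ^ 2) ^ 2 * E * E3 = 0 := by simpa using b1
      have hE30 : E3 = 0 := (mul_eq_zero.mp this).resolve_left (mul_ne_zero hMM0 hE0)
      rw [hE3, h4] at hE30
      simp at hE30
      exact hne hE30
    have hE2' : E2 = Polynomial.C e2 := by rw [hE2, h3', h4]; simp
    rw [hE2'] at b0
    have b0' : E * Polynomial.C e2 = (derivative E) ^ 2 := by
      apply mul_left_cancel₀ hMM0
      linear_combination b0
    by_cases h2 : e2 = 0
    · have hd : derivative E = 0 := by
        rw [h2] at b0'; simpa using b0'.symm
      have h1 : e1 = 0 := by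
        rw [hE1, h2, h3', h4] at hd; simpa using hd
      have hEe : E = Polynomial.C e0 := by rw [hE, h1, h2, h3', h4]; simp
      have he0 : e0 ≠ 0 := by
        rintro h; apply hE0; rw [hEe, h]; simp
      exact aux_final E (Polynomial.C e0) e0 he0 (by rw [hEe]; ring) y t ht0 ht
    · exact aux_final E _ e2 h2 b0' y t ht0 ht
  · obtain ⟨K, hK⟩ : W ^ 2 ∣ N := by
      rw [← IsIntegrallyClosed.pow_dvd_pow_iff (n := 2) (by norm_num)]
      exact ⟨E * Polynomial.C e4, by rw [← b2]; ring⟩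
    refine aux_final E K e4 h4 ?_ y t ht0 ht
    apply mul_left_cancel₀ hMM0
    rw [← mul_assoc, b2, hK]; ring
end

section
/- (Main theorem, characteristic 3) Let q = 3^n and let f(X) = X(1 + aX^{q(q-1)} + bX^{2(q-1)}) with a, b in F_{q^2}^*. Then f is a permutation polynomial of F_{q^2} if and only if (ab)^q = a(b^{q+1} - a^{q+1}) and 1 - (b/a)^{q+1} is a nonzero square in F_q^*. -/
namespace S18

/-- `-D(t)`. -/
def PP {F : Type*} [Field F] (σ : F →+* F) (a b t : F) : F :=
  t ^ 2 + σ a * t ^ 3 + a * t - b * t ^ 4 - σ b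

def Sq {F : Type*} [Field F] (σ : F →+* F) (a b : F) : Prop :=
  ∀ t, t * σ t = 1 → ∃ s, s ≠ 0 ∧ σ s = s ∧ PP σ a b t = s ^ 2 * t ^ 2

def Eqn {F : Type*} [Field F] (σ : F →+* F) (a b t u : F) : Prop :=
  σ a * u ^ 3 + u ^ 2 + σ b = t * (b * u ^ 3 + u + a)

section
variable {F : Type*} [Field F] (σ : F →+* F) (a b : F)

lemma aux1 (A t : F) (hA : A ≠ 0) (ht : t ≠ 0) (h : 1 + A * t ≠ 0) :
    (-t - A⁻¹) * (-t⁻¹ - (-(t + A * t ^ 2))⁻¹) = 1 := by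
  have e : (-(t + A * t ^ 2))⁻¹ = - (t⁻¹ * (1 + A * t)⁻¹) := by
    rw [show -(t + A * t ^ 2) = -(t * (1 + A * t)) by ring, inv_neg, mul_inv]
  have e2 : (-t - A⁻¹) = - (A⁻¹ * (1 + A * t)) := by field_simp; ring
  have e3 : (1 + A * t) * (1 + A * t)⁻¹ = 1 := mul_inv_cancel₀ h
  have e4 : A * A⁻¹ = 1 := mul_inv_cancel₀ hA
  have e5 : t * t⁻¹ = 1 := mul_inv_cancel₀ ht
  rw [e, e2]
  linear_combination (-A⁻¹ * t⁻¹) * e3 + t * t⁻¹ * e4 + e5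

lemma aux2 (w t : F) (hA : w ≠ 0) (ht : t ≠ 0) (h : 1 - t * w ≠ 0) :
    (w⁻¹ - t) * ((t - t ^ 2 * w)⁻¹ - t⁻¹) = 1 := by
  have e : (t - t ^ 2 * w)⁻¹ = (t⁻¹ * (1 - t * w)⁻¹) := by
    rw [show (t - t ^ 2 * w) = (t * (1 - t * w)) by ring, mul_inv]
  have e2 : (w⁻¹ - t) = (w⁻¹ * (1 - t * w)) := by field_simp
  have e3 : (1 - t * w) * (1 - t * w)⁻¹ = 1 := mul_inv_cancel₀ h
  have e4 : w * w⁻¹ = 1 := mul_inv_cancel₀ hA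
  have e5 : t * t⁻¹ = 1 := mul_inv_cancel₀ ht
  rw [e, e2]
  linear_combination (w⁻¹ * t⁻¹) * e3 + t * t⁻¹ * e4 + e5

lemma eqn_iff (h3 : (3 : F) = 0) (t u : F) : Eqn σ a b t u ↔
    (σ a - t * b) * (u + t) ^ 3 + (u + t) ^ 2 = PP σ a b t := by
  unfold Eqn PP
  constructor <;> intro h
  · linear_combination h + (u * t + (σ a - t * b) * (u ^ 2 * t + u * t ^ 2)) * h3
  · linear_combination h - (u * t + (σ a - t * b) * (u ^ 2 * t + u * t ^ 2)) * h3

/-- cubic in `w = 1/(u+t)`. -/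
lemma eqn_w (h3 : (3 : F) = 0) (t u : F) (hu : u + t ≠ 0) : Eqn σ a b t u ↔
    (σ a - t * b) + (u + t)⁻¹ = PP σ a b t * (u + t)⁻¹ ^ 3 := by
  rw [eqn_iff σ a b h3]
  constructor <;> intro h
  · rw [← h]; field_simp
  · field_simp at h; linear_combination h

lemma conj_w (t u : F) (ht : t * σ t = 1) (huu : u * σ u = 1) (hu : u + t ≠ 0) :
    σ ((u + t)⁻¹) = t - t ^ 2 * (u + t)⁻¹ := by
  have t0 : t ≠ 0 := by rintro rfl; simp at ht
  have u0 : u ≠ 0 := by rintro rfl; simp at huu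
  have e1 : σ t = t⁻¹ := by field_simp; linear_combination ht
  have e2 : σ u = u⁻¹ := by field_simp; linear_combination huu
  rw [map_inv₀, map_add, e1, e2]
  have : u⁻¹ + t⁻¹ = (u + t) / (u * t) := by field_simp; ring
  rw [this]; field_simp; ring

lemma PP_conj (hσ : ∀ x, σ (σ x) = x) (t : F) (ht : t * σ t = 1) :
    σ (PP σ a b t / t ^ 2) = PP σ a b t / t ^ 2 := by
  have t0 : t ≠ 0 := by rintro rfl; simp at ht
  have e1 : σ t = t⁻¹ := by field_simp; linear_combination ht
  unfold PP
  simp only [map_div₀, map_add, map_sub, map_mul, map_pow, hσ, e1]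
  field_simp; ring

lemma inj_of_Sq (h3 : (3 : F) = 0) (hS : Sq σ a b) (t u v : F) (ht : t * σ t = 1)
    (hu : u * σ u = 1) (hv : v * σ v = 1) (eu : Eqn σ a b t u) (ev : Eqn σ a b t v) : u = v := by
  have t0 : t ≠ 0 := by rintro rfl; simp at ht
  obtain ⟨s, s0, hs, hP⟩ := hS t ht
  have P0 : PP σ a b t ≠ 0 := by rw [hP]; positivity
  have key : ∀ u, Eqn σ a b t u → u + t ≠ 0 := by
    intro u eu h
    rw [eqn_iff σ a b h3, h] at eu
    apply P0; rw [← eu]; ring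
  have hut := key u eu
  have hvt := key v ev
  rw [eqn_w σ a b h3 t u hut] at eu
  rw [eqn_w σ a b h3 t v hvt] at ev
  have cu := conj_w σ t u ht hu hut
  have cv := conj_w σ t v ht hv hvt
  by_contra hne
  set w := (u + t)⁻¹ with hw
  set z := (v + t)⁻¹ with hz
  have hd : w - z ≠ 0 := by
    intro h
    apply hne
    have : (u + t)⁻¹ = (v + t)⁻¹ := by linear_combination h
    have := inv_injective this
    linear_combination this
  have h1 : (w - z) * (((w - z) * s * t) ^ 2 - 1) = 0 := by
    rw [hP] at eu ev
    linear_combination ev - eu - s ^ 2 * t ^ 2 * (w ^ 2 * z - w * z ^ 2) * h3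
  have h2 : ((w - z) * s * t) ^ 2 - 1 = 0 := (mul_eq_zero.mp h1).resolve_left hd
  have e1 : σ t = t⁻¹ := by field_simp; linear_combination ht
  have h4 : σ ((w - z) * s * t) = - ((w - z) * s * t) := by
    rw [map_mul, map_mul, map_sub, cu, cv, hs, e1]; field_simp; ring
  have h5 : ((w - z) * s * t - 1) * ((w - z) * s * t + 1) = 0 := by linear_combination h2
  have h6 : (w - z) * s * t = 0 := by
    rcases mul_eq_zero.mp h5 with h | h
    · have h : (w - z) * s * t = 1 := by linear_combination h
      rw [h, map_one] at h4
      linear_combination h + h3 - h4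
    · have h : (w - z) * s * t = -1 := by linear_combination h
      rw [h, map_neg, map_one] at h4
      linear_combination h - h3 - h4
  rw [h6] at h2
  norm_num at h2

lemma Sq_of_unique (h3 : (3 : F) = 0) (hσ : ∀ x, σ (σ x) = x)
    (hsq : ∀ z, σ z = z → ∃ y, z = y ^ 2)
    (hex : ∀ t, t * σ t = 1 → ∃ u, u * σ u = 1 ∧ Eqn σ a b t u)
    (huniq : ∀ t u v, t * σ t = 1 → u * σ u = 1 → v * σ v = 1 → Eqn σ a b t u → Eqn σ a b t v →
      u = v) : Sq σ a b := by
  intro t ht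
  have t0 : t ≠ 0 := by rintro rfl; simp at ht
  have e1 : σ t = t⁻¹ := by field_simp; linear_combination ht
  have P0 : PP σ a b t ≠ 0 := by
    intro hP
    set A := σ a - t * b with hA
    have hAc : t * σ A = -(σ b - t * a) := by
      simp only [hA, map_sub, map_mul, hσ, e1]; field_simp; ring
    have hD : -(σ b - t * a) + t ^ 2 + A * t ^ 3 = 0 := by rw [← hP, hA, PP]; ring
    have A0 : A ≠ 0 := by
      intro h
      rw [← hAc, h] at hD
      simp at hD
      exact t0 hD
    have sA0 : σ A ≠ 0 := by simpa using A0
    have hsA : σ A = -(t + A * t ^ 2) := by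
      apply mul_left_cancel₀ t0
      linear_combination hAc + hD - 2 * hD + hD + hAc - hAc + hD
    have hAt : 1 + A * t ≠ 0 := by
      intro h
      apply sA0
      rw [hsA]; linear_combination -t * h
    have := huniq t (-t) (-t - A⁻¹) ht (by simpa using ht) ?_ ?_ ?_
    · have : A⁻¹ = 0 := by linear_combination this
      simp [A0] at this
    · simp only [map_sub, map_neg, map_inv₀, hsA, e1]
      exact aux1 A t A0 t0 hAt
    · rw [eqn_iff σ a b h3, hP]; ring
    · rw [eqn_iff σ a b h3, hP, ← hA]
      field_simp
      ring
  have hE := PP_conj σ a b hσ t ht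
  obtain ⟨y, hy⟩ := hsq _ hE
  have y0 : y ≠ 0 := by
    rintro rfl
    field_simp at hy
    apply P0; rw [hy]; ring
  refine ⟨y, y0, ?_, by field_simp at hy; linear_combination hy⟩
  rw [hy, map_pow] at hE
  rcases sq_eq_sq_iff_eq_or_eq_neg.mp hE with h | h
  · exact h
  exfalso
  obtain ⟨u, hu, eu⟩ := hex t ht
  have hut : u + t ≠ 0 := by
    intro h
    have := eu
    rw [eqn_iff σ a b h3, h] at this
    apply P0; rw [← this]; ring
  have eu2 := eu
  rw [eqn_w σ a b h3 t u hut] at eu2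
  have cu := conj_w σ t u ht hu hut
  set w := (u + t)⁻¹ with hw
  have hP : PP σ a b t = y ^ 2 * t ^ 2 := by field_simp at hy; linear_combination hy
  set d := (y * t)⁻¹ with hd
  have d0 : d ≠ 0 := by positivity
  have hdd : y * t * d = 1 := by rw [hd]; field_simp
  have cd : σ d = - t ^ 2 * d := by
    rw [hd, map_inv₀, map_mul, h, e1]; field_simp
  have cw : σ (w + d) = t - t ^ 2 * (w + d) := by rw [map_add, cu, cd]; ring
  have w0 : w + d ≠ 0 := by
    intro h
    rw [h] at cw
    simp at cw
    exact t0 cw.symm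
  have w1 : 1 - t * (w + d) ≠ 0 := by
    intro h
    have : σ (w + d) ≠ 0 := (map_ne_zero σ).mpr w0
    rw [cw] at this
    apply this; linear_combination t * h
  have h8 : (w + d)⁻¹ - t + t = (w + d)⁻¹ := by ring
  have := huniq t u ((w + d)⁻¹ - t) ht hu ?_ eu ?_
  · have h9 : w = w + d := by
      have h10 : u + t = (w + d)⁻¹ := by linear_combination this
      calc w = (u + t)⁻¹ := hw
        _ = ((w + d)⁻¹)⁻¹ := congrArg _ h10
        _ = w + d := inv_inv _
    apply d0; linear_combination -h9
  · rw [map_sub, map_inv₀, cw, e1]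
    exact aux2 (w + d) t w0 t0 w1
  · rw [eqn_w σ a b h3 _ _ (by rw [h8]; positivity), h8, inv_inv]
    rw [hP] at eu2 ⊢
    linear_combination eu2 - d * (y * t * d + 1) * hdd - y ^ 2 * t ^ 2 * (w ^ 2 * d + w * d ^ 2) * h3

end

section
variable {F : Type*} [Field F] (σ : F →+* F) (a b : F)

lemma cond_facts (hσ : ∀ x, σ (σ x) = x) (ha : a ≠ 0) (hb : b ≠ 0)
    (hc : σ a * σ b = a * (b * σ b - a * σ a)) (C : F) (hC : 1 - (b * σ b) / (a * σ a) = C) :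
    C ≠ 0 ∧ σ C = C ∧ C * a ^ 2 = - σ b ∧ C * (σ a) ^ 2 = -b ∧ C ^ 2 * a * σ a = 1 - C := by
  have sa : σ a ≠ 0 := (map_ne_zero σ).mpr ha
  have sb : σ b ≠ 0 := (map_ne_zero σ).mpr hb
  have h1 : σ C = C := by
    rw [← hC]; simp only [map_sub, map_one, map_div₀, map_mul, hσ]
    rw [mul_comm b, mul_comm a]
  have h0 : C * (a * σ a) = a * σ a - b * σ b := by rw [← hC]; field_simp
  have h2 : C * a ^ 2 = - σ b := by
    apply mul_left_cancel₀ sa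
    linear_combination a * h0 + hc
  have h3 : C * (σ a) ^ 2 = -b := by
    have := congrArg σ h2
    simpa [hσ, h1] using this
  refine ⟨?_, h1, h2, h3, ?_⟩
  · rintro rfl
    apply sb; linear_combination h2
  · apply mul_left_cancel₀ (mul_ne_zero ha sa)
    linear_combination h2 * C * σ a ^ 2 - σ b * h3 + h0

lemma PP_eq (h3 : (3 : F) = 0) (t C : F) (t0 : t ≠ 0) (C0 : C ≠ 0)
    (h2 : C * a ^ 2 = - σ b) (h4 : C * (σ a) ^ 2 = -b) (h5 : C ^ 2 * a * σ a = 1 - C) :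
    PP σ a b t = C * (σ a * t + a * t⁻¹ - C⁻¹) ^ 2 * t ^ 2 := by
  unfold PP
  field_simp
  linear_combination (-C * h2) + (-C * t ^ 4) * h4 - 2 * t ^ 2 * h5 +
    (t ^ 2 * C - t ^ 2 + C * t * a + C * t ^ 3 * σ a) * h3

lemma nec_sq (h3 : (3 : F) = 0) (hσ : ∀ x, σ (σ x) = x) (ha : a ≠ 0) (hb : b ≠ 0)
    (hc : σ a * σ b = a * (b * σ b - a * σ a)) (hS : Sq σ a b) :
    ∃ c, c ≠ 0 ∧ σ c = c ∧ 1 - (b * σ b) / (a * σ a) = c ^ 2 := by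
  obtain ⟨C0, sC, h2, h4, h5⟩ := cond_facts σ a b hσ ha hb hc _ rfl
  set C := 1 - (b * σ b) / (a * σ a) with hC
  obtain ⟨s, s0, hs, hP⟩ := hS 1 (by simp)
  rw [PP_eq σ a b h3 1 C one_ne_zero C0 h2 h4 h5] at hP
  set Y := σ a * 1 + a * 1⁻¹ - C⁻¹ with hY
  have sY : σ Y = Y := by
    rw [hY]; simp [hσ, sC]; ring
  have Y0 : Y ≠ 0 := by
    intro h
    rw [h] at hP
    apply s0
    have : s ^ 2 = 0 := by linear_combination -hP
    simpa using this
  refine ⟨s / Y, div_ne_zero s0 Y0, by rw [map_div₀, hs, sY], ?_⟩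
  rw [div_pow, eq_div_iff (pow_ne_zero 2 Y0)]
  linear_combination hP

lemma suf_sq (h3 : (3 : F) = 0) (hσ : ∀ x, σ (σ x) = x) (ha : a ≠ 0) (hb : b ≠ 0)
    (hc : σ a * σ b = a * (b * σ b - a * σ a)) (c : F) (c0 : c ≠ 0) (sc : σ c = c)
    (hC : 1 - (b * σ b) / (a * σ a) = c ^ 2) : Sq σ a b := by
  obtain ⟨C0, sC, h2, h4, h5⟩ := cond_facts σ a b hσ ha hb hc _ hC
  intro t ht
  have t0 : t ≠ 0 := by rintro rfl; simp at ht
  have e1 : σ t = t⁻¹ := by field_simp; linear_combination ht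
  refine ⟨c * (σ a * t + a * t⁻¹ - (c ^ 2)⁻¹), mul_ne_zero c0 ?_, ?_, ?_⟩
  · intro hY
    set z := σ a * t with hz
    have sz : σ z = a * t⁻¹ := by rw [hz, map_mul, hσ, e1]
    have hzz : z * σ z = a * σ a := by rw [sz, hz]; field_simp
    rw [← sz] at hY
    have q1 : c ^ 2 * (z + σ z) = 1 := by
      have := c0
      field_simp at hY
      linear_combination hY
    -- `(c^2 z + 1)^2 = c^2`
    have q2 : (c ^ 2 * z + 1) ^ 2 = c ^ 2 := by
      linear_combination (c ^ 2 * z) * q1 - c ^ 4 * hzz - h5 + (c ^ 2 * z) * h3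
    have q3 : σ (c ^ 2 * z + 1) = c ^ 2 * z + 1 := by
      rcases sq_eq_sq_iff_eq_or_eq_neg.mp q2 with h | h <;> rw [h] <;> simp [sc]
    have q4 : c ^ 2 * σ z = c ^ 2 * z := by
      simp only [map_add, map_mul, map_pow, map_one, sc] at q3
      linear_combination q3
    have q5 : c ^ 2 = 0 := by
      rw [← q2]
      have : c ^ 2 * z + 1 = 0 := by
        linear_combination -q1 + q4 + c ^ 2 * z * h3
      rw [this]; ring
    exact C0 q5
  · simp only [map_sub, map_add, map_mul, map_inv₀, map_pow, hσ, sc, e1, inv_inv]; ring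
  · rw [PP_eq σ a b h3 t (c ^ 2) t0 C0 h2 h4 h5]; ring
end

open Polynomial in
lemma poly_main {F : Type*} [Field F] (h3 : (3 : F) = 0) (k m : ℕ) (hm : 2 * m = k + 2)
    (hk : 1 ≤ k) (hkF : (k : F) = 0) (a b a' b' : F) (P : F[X])
    (hP : P = X ^ 2 + C a' * X ^ 3 + C a * X - C b * X ^ 4 - C b')
    (hdvd : (X ^ (k + 4) - 1 : F[X]) ∣ P ^ m - X ^ (k + 2)) :
    a' * b' = a * (b * b' - a * a') := by
  have h3X : (3 : F[X]) = 0 := by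
    rw [← map_ofNat C 3, h3, map_zero]
  have hkX : (k : F[X]) = 0 := by
    have := congrArg (C : F → F[X]) hkF
    simpa using this
  have hmX : (m : F[X]) = 1 := by
    have : ((2 * m : ℕ) : F[X]) = ((k + 2 : ℕ) : F[X]) := by rw [hm]
    push_cast at this
    linear_combination m * h3X - this - hkX - h3X + 2 * hkX - 2 * hkX + 2 * this - 2 * this
  obtain ⟨R, hR⟩ := hdvd
  have dP : P.natDegree ≤ 4 := by rw [hP]; compute_degree
  have dR : R.natDegree ≤ k := by
    have hmon : (X ^ (k + 4) - 1 : F[X]).Monic := by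
      have := monic_X_pow_sub_C (1 : F) (n := k + 4) (by omega)
      simpa using this
    have hdeg : (X ^ (k + 4) - 1 : F[X]).natDegree = k + 4 := by
      have := natDegree_X_pow_sub_C (n := k + 4) (r := (1 : F))
      simpa using this
    by_cases hR0 : R = 0
    · simp [hR0]
    have h1 := hmon.natDegree_mul' hR0
    rw [← hR, hdeg] at h1
    have h2 : (P ^ m - X ^ (k + 2)).natDegree ≤ 2 * k + 4 := by
      refine (natDegree_sub_le _ _).trans (max_le ?_ ?_)
      · refine natDegree_pow_le_of_le m dP |>.trans ?_
        omega
      · rw [natDegree_X_pow]; omega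
    omega
  set P' := derivative P with hP'
  have e1 : P * derivative (P ^ m) = P' * P ^ m := by
    obtain ⟨j, rfl⟩ : ∃ j, m = j + 1 := ⟨m - 1, by omega⟩
    rw [derivative_pow_succ, ← hP']
    have : (C ((j : F) + 1) : F[X]) = 1 := by
      rw [← hmX]; simp
    rw [this]; ring
  have eV : P ^ m = X ^ (k + 2) + (X ^ (k + 4) - 1) * R := by linear_combination hR
  have e2 : derivative (P ^ m) = - X ^ (k + 1) + X ^ (k + 3) * R
      + (X ^ (k + 4) - 1) * derivative R := by
    rw [eV]
    simp only [derivative_add, derivative_mul, derivative_sub, derivative_X_pow, derivative_one]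
    push_cast
    simp only [map_add, map_natCast, hkX]
    have e2 : (C 2 : F[X]) = 2 := map_ofNat C 2
    have e4 : (C 4 : F[X]) = 4 := map_ofNat C 4
    rw [e2, e4]
    linear_combination (X ^ (k + 1) + X ^ (k + 3) * R) * h3X
  set R' := derivative R with hR'
  rw [e2, eV] at e1
  set G := P' * R - P * R' with hG
  have eZG : (X ^ (k + 4) - 1) * G = X ^ (k + 1) * (P * X ^ 2 * R - P - P' * X) := by
    rw [hG]; linear_combination -e1
  set S := X ^ 3 * G - (P * X ^ 2 * R - P - P' * X) with hS
  have eG : G = X ^ (k + 1) * S := by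
    rw [hS]; linear_combination -eZG
  have dP' : P'.natDegree ≤ 3 := (natDegree_derivative_le P).trans (by omega)
  have dG : G.natDegree ≤ k + 3 := by
    refine (natDegree_sub_le _ _).trans (max_le ?_ ?_)
    · exact (natDegree_mul_le_of_le dP' dR).trans (by omega)
    · have : R'.natDegree ≤ k - 1 := (natDegree_derivative_le R).trans (by omega)
      exact (natDegree_mul_le_of_le dP this).trans (by omega)
  have dS : ∀ i, 3 ≤ i → S.coeff i = 0 := by
    intro i hi
    have := coeff_X_pow_mul S (k + 1) i
    rw [← this, ← eG]
    exact coeff_eq_zero_of_natDegree_lt (by omega)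
  have eZS : (X ^ (k + 4) - 1) * S = P * X ^ 2 * R - P - P' * X := by
    have hX : (X ^ (k + 1) : F[X]) ≠ 0 := pow_ne_zero _ X_ne_zero
    apply mul_left_cancel₀ hX
    rw [← eZG, eG]; ring
  have eP' : P' = 2 * X + C a - C b * X ^ 3 := by
    rw [hP', hP]
    simp only [derivative_add, derivative_mul, derivative_sub, derivative_X_pow, derivative_C,
      derivative_X]
    have e2 : (C 2 : F[X]) = 2 := map_ofNat C 2
    have e4 : (C 4 : F[X]) = 4 := map_ofNat C 4
    have e3 : (C 3 : F[X]) = 3 := map_ofNat C 3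
    push_cast
    simp only [e2, e3, e4, zero_mul, zero_add, Nat.reduceSub, pow_one, mul_one, sub_zero]
    linear_combination (C a' * X ^ 2 - C b * X ^ 3) * h3X
  -- coefficients of `S`
  have eS : S = X ^ (k + 4) * S - X ^ 2 * (P * R) + (P + P' * X) := by
    linear_combination -eZS
  have ePP : P + P' * X = C b * X ^ 4 + C a' * X ^ 3 - C a * X - C b' := by
    rw [eP', hP]; linear_combination (X ^ 2 + C a * X - C b * X ^ 4) * h3X
  rw [ePP] at eS
  have S0 : S.coeff 0 = -b' := by
    rw [eS]
    simp only [coeff_add, coeff_sub, coeff_X_pow_mul', coeff_C_mul, coeff_X_pow, coeff_X, coeff_C]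
    simp
  have S1 : S.coeff 1 = -a := by
    rw [eS]
    simp only [coeff_add, coeff_sub, coeff_X_pow_mul', coeff_C_mul, coeff_X_pow, coeff_X, coeff_C]
    simp
  set κ := S.coeff 2 with hκ
  have eS2 : S = C κ * X ^ 2 - C a * X - C b' := by
    ext i
    rcases i with _ | _ | _ | i
    · simp [S0, coeff_X, coeff_C]
    · simp [S1, coeff_X, coeff_C]
    · simp [← hκ, coeff_X, coeff_C]
    · rw [dS _ (by omega)]
      simp only [coeff_add, coeff_sub, coeff_C_mul, coeff_X_pow, coeff_X, coeff_C]
      simp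
  set L := C b * X ^ 2 + C a' * X - C κ with hL
  have eT : P * R = X ^ (k + 2) * S + L := by
    have hX : (X ^ 2 : F[X]) ≠ 0 := pow_ne_zero _ X_ne_zero
    apply mul_left_cancel₀ hX
    rw [hL]
    linear_combination eS - eS2
  have eD : derivative (P * R) = P' * R + P * R' := derivative_mul
  have e5 : derivative (P * (P * R)) = - X ^ (k + 1) * S * P := by
    rw [derivative_mul, eD, ← hP']
    have : P * (P' * R - P * R') = P * (X ^ (k + 1) * S) := by rw [← eG]
    linear_combination P * P' * R * h3X - this
  have e6 : derivative (P * L) = X ^ (k + 1) * (- S * P - 2 * (S * P) - X * derivative (S * P)) := by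
    have : P * (P * R) = X ^ (k + 2) * (S * P) + P * L := by rw [eT]; ring
    rw [this, derivative_add, derivative_mul, derivative_X_pow] at e5
    push_cast at e5
    simp only [map_add, map_natCast, hkX] at e5
    have e2 : (C 2 : F[X]) = 2 := map_ofNat C 2
    rw [e2] at e5
    linear_combination e5
  have ePL : P * L = C (-b ^ 2) * X ^ 6 + C (b * κ + a' ^ 2 + b) * X ^ 4
      + C (-a' * κ + a' + a * b) * X ^ 3 + C (-κ + a * a' - b * b') * X ^ 2
      + C (-a * κ - a' * b') * X + C (b' * κ) := by
    rw [hP, hL]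
    simp only [map_add, map_mul, map_sub, map_neg, map_pow]
    ring
  have c0 := congrArg (fun p => coeff p 0) e6
  have c1 := congrArg (fun p => coeff p 1) e6
  simp only [coeff_derivative, ePL, coeff_X_pow_mul'] at c0 c1
  rw [if_neg (by omega)] at c0 c1
  simp only [coeff_add, coeff_sub, coeff_C_mul, coeff_X_pow, coeff_X, coeff_C] at c0 c1
  norm_num at c0 c1
  have c1' : -κ + a * a' - b * b' = 0 := by
    rcases c1 with h | h
    · exact h
    · exfalso
      apply one_ne_zero (α := F)
      linear_combination h3 - h
  linear_combination -c0 + a * c1'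

open Polynomial in
lemma poly_three {F : Type*} [Field F] (a b a' b' : F) (P : F[X])
    (hP : P = X ^ 2 + C a' * X ^ 3 + C a * X - C b * X ^ 4 - C b')
    (hdvd : (X ^ 4 - 1 : F[X]) ∣ P ^ 1 - X ^ 2) : a = 0 := by
  obtain ⟨R, hR⟩ := hdvd
  have dR : R.natDegree ≤ 0 := by
    have hmon : (X ^ 4 - 1 : F[X]).Monic := by
      have := monic_X_pow_sub_C (1 : F) (n := 4) (by omega)
      simpa using this
    have hdeg : (X ^ 4 - 1 : F[X]).natDegree = 4 := by
      have := natDegree_X_pow_sub_C (n := 4) (r := (1 : F))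
      simpa using this
    by_cases hR0 : R = 0
    · simp [hR0]
    have h1 := hmon.natDegree_mul' hR0
    rw [← hR, hdeg] at h1
    have h2 : (P ^ 1 - X ^ 2).natDegree ≤ 4 := by rw [hP]; compute_degree
    omega
  have hR' : C a' * X ^ 3 + C a * X - C b * X ^ 4 - C b' = X ^ 4 * R - R := by
    rw [hP] at hR; linear_combination hR
  have c1 := congrArg (fun p => coeff p 1) hR'
  have : R.coeff 1 = 0 := coeff_eq_zero_of_natDegree_lt (by omega)
  simp only [coeff_add, coeff_sub, coeff_C_mul, coeff_X_pow, coeff_X, coeff_C,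
    coeff_X_pow_mul', this] at c1
  simpa using c1

section
variable {F : Type*} [Field F] (σ : F →+* F) (a b : F)

lemma factsK (hσ : ∀ x, σ (σ x) = x) (f : F → F)
    (hf : ∀ x, x ≠ 0 → f x = x * (1 + a * (x / σ x) + b * (σ x / x) ^ 2))
    (x u : F) (x0 : x ≠ 0) (hu : σ x = u * x) :
    u * σ u = 1 ∧ u * f x = x * (b * u ^ 3 + u + a) ∧
      u * σ (f x) = x * (σ a * u ^ 3 + u ^ 2 + σ b) := by
  have sx0 : σ x ≠ 0 := (map_ne_zero σ).mpr x0
  have u0 : u ≠ 0 := by rintro rfl; simp at hu; exact x0 hu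
  have huu : u * σ u = 1 := by
    have h := congrArg σ hu
    rw [hσ, map_mul, hu] at h
    apply mul_left_cancel₀ x0
    linear_combination -h
  have e1 : σ u = u⁻¹ := by field_simp; linear_combination huu
  have e2 : f x = x * (1 + a * u⁻¹ + b * u ^ 2) := by
    rw [hf x x0, hu]; field_simp
  refine ⟨huu, ?_, ?_⟩
  · rw [e2]; field_simp; ring
  · rw [e2]; simp only [map_add, map_mul, map_inv₀, map_pow, map_one, hu, e1]; field_simp; ring

lemma bij_iff [Finite F] (h3 : (3 : F) = 0) (hσ : ∀ x, σ (σ x) = x)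
    (hsq : ∀ z, σ z = z → ∃ y, z = y ^ 2)
    (h90 : ∀ u, u * σ u = 1 → ∃ x, x ≠ 0 ∧ σ x = u * x) (f : F → F) (hf0 : f 0 = 0)
    (hf : ∀ x, x ≠ 0 → f x = x * (1 + a * (x / σ x) + b * (σ x / x) ^ 2)) :
    Function.Bijective f ↔ Sq σ a b := by
  have ex_u : ∀ x, x ≠ 0 → ∃ u, σ x = u * x := fun x hx => ⟨σ x / x, by field_simp⟩
  have ne0 : ∀ u, u * σ u = 1 → u ≠ 0 := by rintro u h rfl; simp at h
  constructor
  · rintro ⟨hinj, hsurj⟩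
    apply Sq_of_unique σ a b h3 hσ hsq
    · intro t ht
      obtain ⟨y, y0, hy⟩ := h90 t ht
      obtain ⟨x, rfl⟩ := hsurj y
      have x0 : x ≠ 0 := by rintro rfl; exact y0 hf0
      obtain ⟨u, hu⟩ := ex_u x x0
      obtain ⟨k1, k2, k3⟩ := factsK σ a b hσ f hf x u x0 hu
      refine ⟨u, k1, ?_⟩
      rw [Eqn]
      apply mul_left_cancel₀ x0
      rw [← k3, hy]; linear_combination t * k2
    · intro t u v ht hu hv eu ev
      obtain ⟨x, x0, hx⟩ := h90 u hu
      obtain ⟨y, y0, hy⟩ := h90 v hv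
      obtain ⟨-, k2, k3⟩ := factsK σ a b hσ f hf x u x0 hx
      obtain ⟨-, l2, l3⟩ := factsK σ a b hσ f hf y v y0 hy
      have fx0 : f x ≠ 0 := by rw [← hf0]; exact fun h => x0 (hinj h)
      have fy0 : f y ≠ 0 := by rw [← hf0]; exact fun h => y0 (hinj h)
      have sx : σ (f x) = t * f x := by
        apply mul_left_cancel₀ (ne0 u hu)
        rw [k3, eu]; linear_combination -t * k2
      have sy : σ (f y) = t * f y := by
        apply mul_left_cancel₀ (ne0 v hv)
        rw [l3, ev]; linear_combination -t * l2
      set l := f x / f y with hl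
      have t0 := ne0 t ht
      have sl : σ l = l := by
        rw [hl, map_div₀, sx, sy]; field_simp
      have l0 : l ≠ 0 := div_ne_zero fx0 fy0
      have : f (l * y) = f x := by
        rw [hf _ (mul_ne_zero l0 y0), map_mul, sl]
        have e := hf y y0
        have sy0 : σ y ≠ 0 := (map_ne_zero σ).mpr y0
        rw [mul_div_mul_left _ _ l0, mul_div_mul_left _ _ l0, mul_assoc, ← e, hl]
        field_simp
      have := hinj this
      rw [← this, map_mul, sl, hy] at hx
      have hly : l * y ≠ 0 := mul_ne_zero l0 y0
      apply mul_right_cancel₀ hly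
      linear_combination -hx
  · intro hS
    rw [← Finite.injective_iff_bijective]
    have fne : ∀ x, x ≠ 0 → f x ≠ 0 := by
      intro x x0 h
      obtain ⟨u, hu⟩ := ex_u x x0
      obtain ⟨k1, k2, k3⟩ := factsK σ a b hσ f hf x u x0 hu
      rw [h] at k2 k3
      have M : b * u ^ 3 + u + a = 0 := by
        apply mul_left_cancel₀ x0; rw [← k2]; ring
      have N : σ a * u ^ 3 + u ^ 2 + σ b = 0 := by
        apply mul_left_cancel₀ x0; rw [← k3]; simp
      have hE : Eqn σ a b (-u) u := by rw [Eqn, M, N]; ring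
      obtain ⟨s, s0, -, hs⟩ := hS (-u) (by simpa using k1)
      rw [eqn_iff σ a b h3, hs] at hE
      have u0 := ne0 u k1
      have : s ^ 2 * u ^ 2 = 0 := by linear_combination -hE
      have : s ^ 2 * u ^ 2 ≠ 0 := by positivity
      contradiction
    intro x y hxy
    by_cases x0 : x = 0
    · subst x0
      by_contra hy
      exact fne y (Ne.symm hy) (by rw [← hxy, hf0])
    by_cases y0 : y = 0
    · subst y0
      exact absurd (by rw [hxy, hf0]) (fne x x0)
    obtain ⟨u, hu⟩ := ex_u x x0
    obtain ⟨k1, k2, k3⟩ := factsK σ a b hσ f hf x u x0 hu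
    obtain ⟨v, hv⟩ := ex_u y y0
    obtain ⟨l1, l2, l3⟩ := factsK σ a b hσ f hf y v y0 hv
    have fx0 := fne x x0
    obtain ⟨t, ht⟩ := ex_u (f x) fx0
    have htt : t * σ t = 1 := by
      have h := congrArg σ ht
      rw [hσ, map_mul, ht] at h
      apply mul_left_cancel₀ fx0
      linear_combination -h
    have eu : Eqn σ a b t u := by
      rw [Eqn]
      apply mul_left_cancel₀ x0
      rw [← k3, ht]; linear_combination t * k2
    have ev : Eqn σ a b t v := by
      rw [Eqn]
      apply mul_left_cancel₀ y0
      rw [← l3, ← hxy, ht]; rw [← hxy] at l2; linear_combination t * l2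
    have huv := inj_of_Sq σ a b h3 hS t u v htt k1 l1 eu ev
    subst huv
    rw [← hxy, k2] at l2
    have M0 : b * u ^ 3 + u + a ≠ 0 := by
      intro h
      rw [h] at k2
      simp [fx0, ne0 u k1] at k2
    exact mul_right_cancel₀ M0 l2
end

end S18

/-- Main theorem, characteristic 3: For q = 3^n and a, b ∈ F_{q^2}^*,
f(X) = X(1 + aX^{q(q-1)} + bX^{2(q-1)}) permutes F_{q^2} iff
(ab)^q = a(b^{q+1} - a^{q+1}) and 1 - (b/a)^{q+1} is a nonzero square in F_q^*. -/
theorem stmt18 (n : ℕ) (hn : 0 < n)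
    (F : Type*) [Field F] [Fintype F] (hcard : Fintype.card F = (3 ^ n) ^ 2)
    (a b : F) (ha : a ≠ 0) (hb : b ≠ 0) :
    Function.Bijective (fun x : F =>
        x * (1 + a * x ^ (3 ^ n * (3 ^ n - 1)) + b * x ^ (2 * (3 ^ n - 1))))
      ↔ (a * b) ^ (3 ^ n) = a * (b ^ (3 ^ n + 1) - a ^ (3 ^ n + 1))
        ∧ ∃ c : F, c ≠ 0 ∧ c ^ (3 ^ n) = c
            ∧ 1 - (b / a) ^ (3 ^ n + 1) = c ^ 2 := by
  classical
  haveI : Fact (Nat.Prime 3) := ⟨Nat.prime_three⟩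
  haveI hch : CharP F 3 := charP_of_card_eq_prime_pow (p := 3) (f := n * 2) (by
    rw [hcard, pow_mul])
  have h3 : (3 : F) = 0 := by
    have := CharP.cast_eq_zero F 3
    exact_mod_cast this
  set σ : F →+* F := iterateFrobenius F 3 n with hσdef
  have sdef : ∀ x, σ x = x ^ 3 ^ n := fun x => rfl
  clear_value σ
  have hσ : ∀ x, σ (σ x) = x := by
    intro x
    rw [sdef, sdef, ← pow_mul, ← sq, ← hcard, FiniteField.pow_card]
  have hq3 : 3 ≤ 3 ^ n := Nat.le_self_pow hn.ne' 3
  have hodd : Odd (3 ^ n) := Odd.pow (by decide)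
  have hqF : ((3 ^ n : ℕ) : F) = 0 := by
    push_cast; rw [h3, zero_pow hn.ne']
  generalize hq : 3 ^ n = q at *
  have fixpow : ∀ z : F, z ≠ 0 → σ z = z → z ^ (q - 1) = 1 := by
    intro z z0 hz
    apply mul_left_cancel₀ z0
    rw [← pow_succ', Nat.sub_add_cancel (by omega), ← sdef, hz, mul_one]
  obtain ⟨m, hm⟩ := hodd
  have hsq : ∀ z, σ z = z → ∃ y, z = y ^ 2 := by
    intro z hz
    by_cases z0 : z = 0
    · exact ⟨0, by simp [z0]⟩
    have hr : ringChar F ≠ 2 := by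
      rw [ringChar.eq F 3]; norm_num
    have : IsSquare z := by
      rw [FiniteField.isSquare_iff hr z0, hcard]
      have : q ^ 2 / 2 = (q - 1) * (m + 1) := by
        rw [hm, Nat.add_sub_cancel]
        have : (2 * m + 1) ^ 2 = 2 * (2 * m * (m + 1)) + 1 := by ring
        omega
      rw [this, pow_mul, fixpow z z0 hz, one_pow]
    obtain ⟨y, hy⟩ := this
    exact ⟨y, by rw [hy, sq]⟩
  -- a primitive `(q+1)`-th root of unity
  obtain ⟨g, ζ, g0, hζg, hζ⟩ : ∃ g ζ : F, g ≠ 0 ∧ σ g = ζ * g ∧ IsPrimitiveRoot ζ (q + 1) := by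
    obtain ⟨g, hg⟩ := IsCyclic.exists_ofOrder_eq_natCard (α := Fˣ)
    rw [Nat.card_eq_fintype_card, Fintype.card_units, hcard] at hg
    have e : q ^ 2 - 1 = (q - 1) * (q + 1) := by
      rw [hm, Nat.add_sub_cancel]
      have : (2 * m + 1) ^ 2 = 2 * m * (2 * m + 1 + 1) + 1 := by ring
      omega
    have h1 : IsPrimitiveRoot g (q ^ 2 - 1) := by
      rw [← hg]; exact IsPrimitiveRoot.orderOf g
    have h2 := h1.pow (by rw [e]; exact Nat.mul_pos (by omega) (by omega)) e
    have h4 := h2.map_of_injective (f := Units.coeHom F) Units.val_injective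
    refine ⟨(g : F), _, g.ne_zero, ?_, h4⟩
    rw [sdef]
    simp only [Units.coeHom_apply, Units.val_pow_eq_pow_val]
    rw [← pow_succ, Nat.sub_add_cancel (by omega)]
  have h90 : ∀ u, u * σ u = 1 → ∃ x, x ≠ 0 ∧ σ x = u * x := by
    intro u hu
    by_cases h : u = -1
    · refine ⟨g - σ g, ?_, ?_⟩
      · intro h0
        have hne : ζ ≠ 1 := hζ.ne_one (by omega)
        have : (1 - ζ) * g = 0 := by rw [hζg] at h0; linear_combination h0
        rcases mul_eq_zero.mp this with h' | h'
        · apply hne; linear_combination -h'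
        · exact g0 h'
      · rw [map_sub, hσ, h]; ring
    · refine ⟨1 + σ u, ?_, ?_⟩
      · intro h0
        apply h
        have := congrArg σ h0
        simp only [map_add, map_one, hσ, map_zero] at this
        linear_combination this
      · rw [map_add, map_one, hσ]; linear_combination -hu
  have hbij := S18.bij_iff σ a b h3 hσ hsq h90 (fun x : F =>
        x * (1 + a * x ^ (q * (q - 1)) + b * x ^ (2 * (q - 1)))) (by simp) (by
      intro x x0
      have sx0 : σ x ≠ 0 := (map_ne_zero σ).mpr x0
      have e1 : x ^ (q - 1) = σ x / x := by
        rw [eq_div_iff x0, ← pow_succ, Nat.sub_add_cancel (by omega), sdef]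
      have e2 : x ^ (q * (q - 1)) = x / σ x := by
        rw [mul_comm, pow_mul, e1, ← sdef, map_div₀, hσ]
      have e3 : x ^ (2 * (q - 1)) = (σ x / x) ^ 2 := by
        rw [mul_comm, pow_mul, e1]
      simp only [e2, e3])
  rw [hbij]
  have hnorm : ∀ x : F, x ^ (q + 1) = x * σ x := by
    intro x; rw [sdef, pow_succ']
  have hc1 : (a * b) ^ q = a * (b ^ (q + 1) - a ^ (q + 1)) ↔
      σ a * σ b = a * (b * σ b - a * σ a) := by
    rw [hnorm, hnorm, ← sdef, map_mul]
  have hc2 : (b / a) ^ (q + 1) = (b * σ b) / (a * σ a) := by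
    rw [hnorm, map_div₀, div_mul_div_comm]
  rw [hc1, hc2]
  simp only [← sdef]
  constructor
  · intro hS
    have hcond : σ a * σ b = a * (b * σ b - a * σ a) := by
      open Polynomial in
      have hdvd : ∀ P : F[X], P = X ^ 2 + C (σ a) * X ^ 3 + C a * X - C b * X ^ 4 - C (σ b) →
          (X ^ (q + 1) - 1 : F[X]) ∣ P ^ m - X ^ (q - 1) := by
        intro P hP
        rw [X_pow_sub_one_eq_prod (by omega : 0 < q + 1) hζ]
        apply Finset.prod_dvd_of_coprime
        · intro x _ y _ hxy
          exact pairwise_coprime_X_sub_C (s := id) Function.injective_id hxy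
        · intro t ht
          rw [mem_nthRootsFinset (by omega)] at ht
          rw [dvd_iff_isRoot, IsRoot.def]
          obtain ⟨s, s0, hs, hPs⟩ := hS t (by rw [← hnorm, ht])
          have : P.eval t = S18.PP σ a b t := by rw [hP, S18.PP]; simp
          rw [eval_sub, eval_pow, this, hPs, ← mul_pow, ← pow_mul, mul_pow]
          have h2 : 2 * m = q - 1 := by omega
          rw [h2, fixpow s s0 hs]
          simp
      by_cases hq9 : q = 3
      · exfalso
        have hm1 : m = 1 := by omega
        subst hm1
        have := hdvd _ rfl
        rw [hq9] at this
        exact ha (S18.poly_three a b (σ a) (σ b) _ rfl this)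
      · obtain ⟨k, hk⟩ : ∃ k, q = k + 3 := ⟨q - 3, by omega⟩
        have := hdvd _ rfl
        have e1 : q + 1 = k + 4 := by omega
        have e2 : q - 1 = k + 2 := by omega
        rw [e1, e2] at this
        refine S18.poly_main h3 k m (by omega) (by omega) ?_ a b (σ a) (σ b) _ rfl this
        rw [hk] at hqF
        push_cast at hqF
        linear_combination hqF - h3
    exact ⟨hcond, S18.nec_sq σ a b h3 hσ ha hb hcond hS⟩
  · rintro ⟨hcond, c, c0, sc, hc⟩
    exact S18.suf_sq σ a b h3 hσ ha hb hcond c c0 sc hc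
end
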